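/- Let 𝒲 = [e_n] be a Banach space with a Schauder basis and suppose 𝒲 = [e_n] is α-tight for a countable ordinal α. Then no block subspace 𝒴 = [y_n] of 𝒲 is β-minimal for any ordinal β > α, and 𝒲 contains no minimal infinite-dimensional closed subspace. -/

import Mathlib

open Filter Topology

namespace Rosendal

variable {𝒲 : Type} [NormedAddCommGroup 𝒲] [NormedSpace ℝ 𝒲]

/-- `(e n)` is a Schauder basis of the Banach space `𝒲`: every vector has a unique
representation as a norm-convergent series `∑ a n • e n`. -/
def IsSchauderBasis (e : ℕ → 𝒲) : Prop :=
  ∀ x : 𝒲, ∃! a : ℕ → ℝ,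
    Tendsto (fun N => ∑ i ∈ Finset.range N, a i • e i) atTop (𝓝 x)

/-- `x` is a linear combination of the vectors `b i`, `i ∈ s`. -/
def SuppIn (b : ℕ → 𝒲) (x : 𝒲) (s : Finset ℕ) : Prop :=
  ∃ a : ℕ → ℝ, x = ∑ i ∈ s, a i • b i

/-- `(y n)` is a block sequence with respect to the basic sequence `(b n)`: a sequence of
nonzero finite linear combinations of the `b i` with successive supports. -/
def IsBlockSeq (b : ℕ → 𝒲) (y : ℕ → 𝒲) : Prop :=
  (∀ n, y n ≠ 0) ∧
  ∃ D : ℕ → Finset ℕ, (∀ n, SuppIn b (y n) (D n)) ∧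
    ∀ n, ∀ i ∈ D n, ∀ j ∈ D (n + 1), i < j

/-- The closed linear span of a set. -/
noncomputable def closedSpan (S : Set 𝒲) : Submodule ℝ 𝒲 :=
  (Submodule.span ℝ S).topologicalClosure

/-- `(x i)_{i<k} ∼_K (y i)_{i<k}`:
`(1/K)‖∑ a i • x i‖ ≤ ‖∑ a i • y i‖ ≤ K‖∑ a i • x i‖` for all scalars. -/
def SeqEquiv (K : ℝ) (k : ℕ) (x y : ℕ → 𝒲) : Prop :=
  ∀ a : ℕ → ℝ,
    (1 / K) * ‖∑ i ∈ Finset.range k, a i • x i‖ ≤ ‖∑ i ∈ Finset.range k, a i • y i‖ ∧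
    ‖∑ i ∈ Finset.range k, a i • y i‖ ≤ K * ‖∑ i ∈ Finset.range k, a i • x i‖

/-- The tree `T((x n), Y, K)` of finite sequences `(y 0, …, y k)` of vectors of `Y` that are
`K`-equivalent to `(x 0, …, x k)`, ordered by end-extension. -/
def embTree (x : ℕ → 𝒲) (Y : Set 𝒲) (K : ℝ) : Set (List 𝒲) :=
  {l | (∀ v ∈ l, v ∈ Y) ∧ SeqEquiv K l.length (fun i => l.getD i 0) x}

open Classical in
/-- The rank of a tree of finite sequences: if the proper end-extension relation is
well-founded (equivalently, for trees, there is no infinite branch), this is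
`sup { ρ(s) + 1 : s ∈ T }` where `ρ` is the usual rank function; otherwise it is `∞ = ⊤`. -/
noncomputable def treeRank (T : Set (List 𝒲)) : WithTop Ordinal :=
  if h : WellFounded (fun t s : T => s.val <+: t.val ∧ s.val ≠ t.val) then
    ((⨆ s : T, Order.succ ((h.apply s).rank) : Ordinal) : WithTop Ordinal)
  else ⊤

open Classical in
/-- The embeddability index `Emb((x n), Y) = sup_{K ≥ 1} rank T((x n), Y, K)`. -/
noncomputable def embIndex (x : ℕ → 𝒲) (Y : Set 𝒲) : WithTop Ordinal :=
  if ∃ K : ℝ, 1 ≤ K ∧ treeRank (embTree x Y K) = ⊤ then ⊤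
  else ((sSup {o : Ordinal | ∃ K : ℝ, 1 ≤ K ∧
      (o : WithTop Ordinal) = treeRank (embTree x Y K)} : Ordinal) : WithTop Ordinal)

/-- `(I m)` is a sequence of successive nonempty finite intervals `I 0 < I 1 < …` of `ℕ`. -/
def IntervalSeq (I : ℕ → Finset ℕ) : Prop :=
  (∀ m, ∃ a b : ℕ, a ≤ b ∧ I m = Finset.Icc a b) ∧
  ∀ m, ∀ i ∈ I m, ∀ j ∈ I (m + 1), i < j

/-- The closed subspace `[b n : n ∉ ⋃_{m ∈ A} I m]`. -/
noncomputable def residualSpace (b : ℕ → 𝒲) (I : ℕ → Finset ℕ) (A : Set ℕ) :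
    Submodule ℝ 𝒲 :=
  closedSpan {v | ∃ n : ℕ, (∀ m ∈ A, n ∉ I m) ∧ v = b n}

/-- The space `[b n]` with its basis `(b n)` is `α`-tight. -/
def IsAlphaTight (b : ℕ → 𝒲) (α : Ordinal) : Prop :=
  ∀ y : ℕ → 𝒲, IsBlockSeq b y →
    ∃ I : ℕ → Finset ℕ, IntervalSeq I ∧
      ∀ A : Set ℕ, A.Infinite →
        embIndex y (residualSpace b I A : Set 𝒲) ≤ (α : WithTop Ordinal)

/-- The space `[b n]` with its basis `(b n)` is `α`-minimal: every block subspace `[z n]`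
`α`-embeds into every infinite-dimensional subspace `Y ⊆ [b n]`. -/
def IsAlphaMinimal (b : ℕ → 𝒲) (α : Ordinal) : Prop :=
  ∀ z : ℕ → 𝒲, IsBlockSeq b z →
    ∀ Y : Submodule ℝ 𝒲, (Y : Set 𝒲) ⊆ (closedSpan (Set.range b) : Set 𝒲) →
      ¬FiniteDimensional ℝ Y →
        (α : WithTop Ordinal) ≤ embIndex z (Y : Set 𝒲)

/-- `X` embeds isomorphically into `Y` (as an isomorphism onto its image). -/
def LinIsoEmbeds (X Y : Submodule ℝ 𝒲) : Prop :=
  ∃ T : X →ₗ[ℝ] 𝒲, (∀ v : X, T v ∈ Y) ∧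
    ∃ c C : ℝ, 0 < c ∧ ∀ v : X, c * ‖v‖ ≤ ‖T v‖ ∧ ‖T v‖ ≤ C * ‖v‖

/-- `X` is a minimal space: it embeds isomorphically into every infinite-dimensional
closed subspace of itself. -/
def IsMinimalSpace (X : Submodule ℝ 𝒲) : Prop :=
  ∀ Y : Submodule ℝ 𝒲, Y ≤ X → IsClosed (Y : Set 𝒲) → ¬FiniteDimensional ℝ Y →
    LinIsoEmbeds X Y

/-- `F` embeds into `Y` with constant `K`. -/
def KEmbeds (K : ℝ) (F Y : Submodule ℝ 𝒲) : Prop :=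
  ∃ T : F →ₗ[ℝ] 𝒲, (∀ v : F, T v ∈ Y) ∧
    ∀ v : F, (1 / K) * ‖v‖ ≤ ‖T v‖ ∧ ‖T v‖ ≤ K * ‖v‖

end Rosendal

namespace Rosendal

section Helpers

variable {𝒲 : Type} [NormedAddCommGroup 𝒲] [NormedSpace ℝ 𝒲]

theorem rank_mono_aux {A B : Type} {r : A → A → Prop} {s : B → B → Prop} (f : A → B)
    (hf : ∀ a b, r a b → s (f a) (f b)) (hr : WellFounded r) (hs : WellFounded s) (a : A) :
    (hr.apply a).rank ≤ (hs.apply (f a)).rank := by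
  induction a using hr.induction with
  | _ a ih =>
    rw [Acc.rank_eq]
    apply Ordinal.iSup_le
    rintro ⟨b, hb⟩
    exact Order.succ_le_of_lt ((ih b hb).trans_lt (Acc.rank_lt_of_rel (hs.apply (f a)) (hf _ _ hb)))

theorem treeRank_mono {T T' : Set (List 𝒲)} (h : T ⊆ T') : treeRank T ≤ treeRank T' := by
  unfold treeRank
  by_cases h' : WellFounded (fun t s : T' => s.val <+: t.val ∧ s.val ≠ t.val)
  · have h1 : WellFounded (fun t s : T => s.val <+: t.val ∧ s.val ≠ t.val) :=
      InvImage.wf (Set.inclusion h) h'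
    rw [dif_pos h1, dif_pos h', WithTop.coe_le_coe]
    apply Ordinal.iSup_le
    intro s
    refine le_trans ?_ (Ordinal.le_iSup _ (Set.inclusion h s))
    exact Order.succ_le_succ (rank_mono_aux (Set.inclusion h) (fun a b hab => hab) h1 h' s)
  · rw [dif_neg h']
    exact le_top

theorem embIndex_mono (x : ℕ → 𝒲) {Y Y' : Set 𝒲} (h : Y ⊆ Y') :
    embIndex x Y ≤ embIndex x Y' := by
  have hm : ∀ K, treeRank (embTree x Y K) ≤ treeRank (embTree x Y' K) := fun K =>
    treeRank_mono (fun l hl => ⟨fun v hv => h (hl.1 v hv), hl.2⟩)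
  unfold embIndex
  by_cases h' : ∃ K : ℝ, 1 ≤ K ∧ treeRank (embTree x Y' K) = ⊤
  · rw [if_pos h']; exact le_top
  · have h1 : ¬ ∃ K : ℝ, 1 ≤ K ∧ treeRank (embTree x Y K) = ⊤ := by
      rintro ⟨K, hK, ht⟩
      exact h' ⟨K, hK, top_le_iff.1 (ht ▸ hm K)⟩
    rw [if_neg h', if_neg h1, WithTop.coe_le_coe]
    apply csSup_le'
    rintro o ⟨K, hK, ho⟩
    push Not at h'
    obtain ⟨o', ho'⟩ := WithTop.ne_top_iff_exists.1 (h' K hK)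
    have h2 : o ≤ o' := by
      rw [← WithTop.coe_le_coe, ho, ho']; exact hm K
    refine h2.trans (le_csSup ?_ ⟨K, hK, ho'⟩)
    have : BddAbove (Set.range fun K : ℝ => (treeRank (embTree x Y' K)).untopD 0) :=
      Ordinal.bddAbove_of_small
    refine this.mono ?_
    rintro p ⟨K, hK, hp⟩
    exact ⟨K, by simp [← hp]⟩

theorem embIndex_eq_top (x w : ℕ → 𝒲) (Y : Set 𝒲) (K : ℝ) (hK : 1 ≤ K) (hw : ∀ n, w n ∈ Y)
    (h : ∀ k, SeqEquiv K k w x) : embIndex x Y = ⊤ := by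
  unfold embIndex
  refine if_pos ⟨K, hK, ?_⟩
  unfold treeRank
  refine dif_neg ?_
  have hmem : ∀ k, (List.range k).map w ∈ embTree x Y K := by
    intro k
    refine ⟨by simpa using fun i _ => hw i, ?_⟩
    have := h k
    intro a
    have e1 : ∑ i ∈ Finset.range ((List.range k).map w).length,
        a i • ((List.range k).map w).getD i 0 = ∑ i ∈ Finset.range k, a i • w i := by
      simp only [List.length_map, List.length_range]
      refine Finset.sum_congr rfl fun i hi => ?_
      have := Finset.mem_range.1 hi
      simp [List.getD, this]
    rw [e1]
    simpa using this a
  intro hwf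
  rw [wellFounded_iff_isEmpty_descending_chain] at hwf
  refine hwf.elim ⟨fun k => ⟨_, hmem k⟩, fun k => ⟨?_, ?_⟩⟩
  · simp [List.range_succ]
  · intro hh
    have := congrArg List.length hh
    simp at this

theorem succ_ge (D : ℕ → Finset ℕ) (hD : ∀ n, (D n).Nonempty)
    (h : ∀ n, ∀ i ∈ D n, ∀ j ∈ D (n + 1), i < j) : ∀ n, ∀ i ∈ D n, n ≤ i := by
  intro n
  induction n with
  | zero => intros; omega
  | succ n ih =>
    intro j hj
    obtain ⟨i, hi⟩ := hD n
    have := ih i hi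
    have := h n i hi j hj
    omega

theorem succ_lt (D : ℕ → Finset ℕ) (hD : ∀ n, (D n).Nonempty)
    (h : ∀ n, ∀ i ∈ D n, ∀ j ∈ D (n + 1), i < j) {m n : ℕ} (hmn : m < n) :
    ∀ i ∈ D m, ∀ j ∈ D n, i < j := by
  induction n, hmn using Nat.le_induction with
  | base => exact h m
  | succ n hn ih =>
    intro i hi j hj
    obtain ⟨k, hk⟩ := hD n
    exact (ih i hi k hk).trans (h n k hk j hj)

theorem choose_sets (D I : ℕ → Finset ℕ) (hD : ∀ n, ∀ i ∈ D n, n ≤ i)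
    (hI : ∀ n, ∀ i ∈ I n, n ≤ i) :
    ∃ A B : Set ℕ, A.Infinite ∧ B.Infinite ∧ ∀ m ∈ A, ∀ n ∈ B, ∀ i ∈ D n, i ∉ I m := by
  let s : ℕ → ℕ := fun k => Nat.rec 0 (fun _ t => t + 1 + (D t).sup id + (I t).sup id) k
  have hs : ∀ k, s (k + 1) = s k + 1 + (D (s k)).sup id + (I (s k)).sup id := fun k => rfl
  have hmono : StrictMono s := strictMono_nat_of_lt_succ (fun k => by rw [hs]; omega)
  have key : ∀ a b, a < b → ∀ i, (i ∈ D (s a) ∨ i ∈ I (s a)) → i < s b := by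
    intro a b hab i hi
    have h1 : s (a + 1) ≤ s b := hmono.monotone hab
    rw [hs] at h1
    rcases hi with hi | hi
    · have : i ≤ (D (s a)).sup id := Finset.le_sup (f := id) hi
      omega
    · have : i ≤ (I (s a)).sup id := Finset.le_sup (f := id) hi
      omega
  refine ⟨Set.range fun k => s (2 * k), Set.range fun k => s (2 * k + 1),
    Set.infinite_range_of_injective ?_, Set.infinite_range_of_injective ?_, ?_⟩
  · intro a b hab
    have := hmono.injective (show s (2 * a) = s (2 * b) from hab)
    omega
  · intro a b hab
    have : 2 * a + 1 = 2 * b + 1 := hmono.injective hab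
    omega
  · rintro _ ⟨a, rfl⟩ _ ⟨b, rfl⟩ i hi hi'
    rcases lt_or_gt_of_ne (show 2 * a ≠ 2 * b + 1 by omega) with h | h
    · exact absurd (key _ _ h i (Or.inr hi')) (not_lt.2 (hD _ i hi))
    · exact absurd (key _ _ h i (Or.inl hi)) (not_lt.2 (hI _ i hi'))

theorem exists_coord (e : ℕ → 𝒲) (he : IsSchauderBasis e) :
    ∃ c : ℕ → (𝒲 →ₗ[ℝ] ℝ),
      (∀ x, Tendsto (fun N => ∑ i ∈ Finset.range N, c i x • e i) atTop (𝓝 x)) ∧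
      ∀ i j, c i (e j) = if i = j then 1 else 0 := by
  choose a ha hu using he
  refine ⟨fun i => { toFun := fun x => a x i, map_add' := ?_, map_smul' := ?_ }, ha, ?_⟩
  · intro x y
    have := hu (x + y) (fun i => a x i + a y i) (by
      simpa [add_smul, Finset.sum_add_distrib] using (ha x).add (ha y))
    exact (congrFun this i).symm
  · intro r x
    have := hu (r • x) (fun i => r * a x i) (by
      simpa [mul_smul, Finset.smul_sum] using (ha x).const_smul r)
    exact (congrFun this i).symm
  · intro i j
    have := hu (e j) (fun i => if i = j then 1 else 0) (by
      refine tendsto_const_nhds.congr' ?_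
      filter_upwards [eventually_gt_atTop j] with N hN
      simp [hN])
    exact (congrFun this i).symm

theorem mem_residual (b : ℕ → 𝒲) (I : ℕ → Finset ℕ) (A : Set ℕ) (x : 𝒲) (D : Finset ℕ)
    (hx : SuppIn b x D) (h : ∀ m ∈ A, ∀ i ∈ D, i ∉ I m) : x ∈ residualSpace b I A := by
  obtain ⟨a, rfl⟩ := hx
  refine Submodule.sum_mem _ fun i hi => Submodule.smul_mem _ _ ?_
  exact Submodule.le_topologicalClosure _ (Submodule.subset_span ⟨i, fun m hm => h m hm i hi, rfl⟩)

theorem suppIn_nonempty {b : ℕ → 𝒲} {x : 𝒲} {D : Finset ℕ} (h : SuppIn b x D) (hx : x ≠ 0) :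
    D.Nonempty := by
  rw [Finset.nonempty_iff_ne_empty]
  rintro rfl
  obtain ⟨a, ha⟩ := h
  exact hx (by simpa using ha)

theorem interval_nonempty {I : ℕ → Finset ℕ} (hI : IntervalSeq I) (n : ℕ) : (I n).Nonempty := by
  obtain ⟨a, b, hab, h⟩ := hI.1 n
  rw [h]; exact Finset.nonempty_Icc.2 hab

/-- A submodule containing an infinite sub-family of a family with biorthogonal functionals. -/
theorem infDim_of_biorth (y : ℕ → 𝒲) (φ : ℕ → (𝒲 →ₗ[ℝ] ℝ)) (h0 : ∀ n, φ n (y n) ≠ 0)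
    (h1 : ∀ n m, n ≠ m → φ n (y m) = 0) (B : Set ℕ) (hB : B.Infinite) (Y : Submodule ℝ 𝒲)
    (hY : ∀ n ∈ B, y n ∈ Y) : ¬ FiniteDimensional ℝ Y := by
  intro hfin
  have := hB.to_subtype
  have hli : LinearIndependent ℝ (fun n : B => (⟨y n, hY n n.2⟩ : Y)) := by
    rw [linearIndependent_iff']
    intro s g hg i hi
    have h2 := congrArg (fun v : Y => φ i (v : 𝒲)) hg
    simp only [Submodule.coe_sum, Submodule.coe_smul, map_sum, map_smul, ZeroMemClass.coe_zero,
      map_zero, smul_eq_mul] at h2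
    rw [Finset.sum_eq_single i] at h2
    · exact (mul_eq_zero.1 h2).resolve_right (h0 _)
    · intro j _ hj
      rw [h1 i j (fun h => hj (Subtype.ext h.symm)), mul_zero]
    · intro h; exact absurd hi h
  have := hli.finite
  exact not_finite B

theorem exists_in_kernels (X : Submodule ℝ 𝒲) (hX : ¬ FiniteDimensional ℝ X)
    {ι : Type} [Finite ι] (φ : ι → (𝒲 →ₗ[ℝ] ℝ)) (G : Submodule ℝ 𝒲) (hG : FiniteDimensional ℝ G) :
    ∃ x ∈ X, (∀ i, φ i x = 0) ∧ x ∉ G := by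
  by_contra hcon
  push Not at hcon
  apply hX
  apply Module.Finite.iff_fg.2
  apply Submodule.fg_of_fg_map_of_fg_inf_ker (LinearMap.pi φ)
  · exact IsNoetherian.noetherian _
  · have hle : X ⊓ LinearMap.ker (LinearMap.pi φ) ≤ G := by
      rintro x ⟨hx, hk⟩
      exact hcon x hx (fun i => congrFun (LinearMap.mem_ker.1 hk) i)
    have := Submodule.finiteDimensional_of_le hle
    exact Module.Finite.iff_fg.1 this

theorem exists_functional (G : Submodule ℝ 𝒲) (hG : FiniteDimensional ℝ G) (x : 𝒲) (hx : x ∉ G) :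
    ∃ f : 𝒲 →L[ℝ] ℝ, f x = 1 ∧ ∀ g ∈ G, f g = 0 := by
  have hc : IsClosed (G : Set 𝒲) := G.closed_of_finiteDimensional
  have hne : G.mkQL x ≠ 0 := by simpa using hx
  obtain ⟨f, hf⟩ := SeparatingDual.exists_eq_one (R := ℝ) hne
  refine ⟨f.comp G.mkQL, hf, fun g hg => ?_⟩
  have : G.mkQL g = 0 := by simpa using hg
  simp only [ContinuousLinearMap.comp_apply, this, map_zero]

/-- The data of one step of the gliding hump. -/
structure Hump (𝒲 : Type) [NormedAddCommGroup 𝒲] [NormedSpace ℝ 𝒲] where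
  x : 𝒲
  f : 𝒲 →L[ℝ] ℝ
  N : ℕ
  M : ℕ
  k : ℕ

theorem exists_humps (e : ℕ → 𝒲) (c : ℕ → (𝒲 →ₗ[ℝ] ℝ))
    (hc : ∀ x, Tendsto (fun N => ∑ i ∈ Finset.range N, c i x • e i) atTop (𝓝 x))
    (X : Submodule ℝ 𝒲) (hX : ¬ FiniteDimensional ℝ X) :
    ∃ p : ℕ → Hump 𝒲,
      (∀ n, (p n).x ∈ X ∧ (p n).f (p n).x = 1 ∧ (∀ i < (p n).N, c i (p n).x = 0) ∧
        ‖(p n).f‖ * ‖∑ i ∈ Finset.range (p n).M, c i (p n).x • e i - (p n).x‖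
          ≤ (1 / 4) * (1 / 2) ^ (p n).k) ∧
      ∀ m n, m < n → (p m).f (p n).x = 0 ∧ (p n).f (p m).x = 0 ∧ (p m).M ≤ (p n).N ∧
        (p m).k < (p n).k := by
  classical
  refine exists_seq_of_forall_finset_exists
    (fun p : Hump 𝒲 => p.x ∈ X ∧ p.f p.x = 1 ∧ (∀ i < p.N, c i p.x = 0) ∧
        ‖p.f‖ * ‖∑ i ∈ Finset.range p.M, c i p.x • e i - p.x‖ ≤ (1 / 4) * (1 / 2) ^ p.k)
    (fun p q : Hump 𝒲 => p.f q.x = 0 ∧ q.f p.x = 0 ∧ p.M ≤ q.N ∧ p.k < q.k) ?_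
  intro s _
  let G : Submodule ℝ 𝒲 := Submodule.span ℝ ((fun p : Hump 𝒲 => p.x) '' (s : Set (Hump 𝒲)))
  have hG : FiniteDimensional ℝ G :=
    FiniteDimensional.span_of_finite ℝ (s.finite_toSet.image _)
  let N := s.sup Hump.M
  let k := s.sup Hump.k + 1
  obtain ⟨x, hxX, hx0, hxG⟩ := exists_in_kernels X hX
    (ι := Fin N ⊕ s) (Sum.elim (fun i => c i) (fun p => (p.1.f : 𝒲 →ₗ[ℝ] ℝ))) G hG
  obtain ⟨f, hf1, hf0⟩ := exists_functional G hG x hxG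
  have hpos : (0 : ℝ) < (1 / 4) * (1 / 2) ^ k := by positivity
  have ht : Tendsto (fun M => ‖f‖ * ‖∑ i ∈ Finset.range M, c i x • e i - x‖) atTop (𝓝 0) := by
    have := (tendsto_iff_norm_sub_tendsto_zero.1 (hc x)).const_mul ‖f‖
    simpa using this
  obtain ⟨M, hM⟩ := (ht.eventually_lt_const hpos).exists
  refine ⟨⟨x, f, N, M, k⟩, ⟨hxX, hf1, fun i hi => hx0 (Sum.inl ⟨i, hi⟩), hM.le⟩, fun p hp => ?_⟩
  refine ⟨hx0 (Sum.inr ⟨p, hp⟩), hf0 _ (Submodule.subset_span ⟨p, hp, rfl⟩),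
    Finset.le_sup hp, ?_⟩
  exact Nat.lt_succ_of_le (Finset.le_sup hp)

theorem exists_perturb [CompleteSpace 𝒲] (x z : ℕ → 𝒲) (f : ℕ → 𝒲 →L[ℝ] ℝ)
    (hf1 : ∀ n, f n (x n) = 1) (hf0 : ∀ n m, n ≠ m → f n (x m) = 0)
    (h : ∀ n, ‖f n‖ * ‖z n - x n‖ ≤ (1 / 4) * (1 / 2) ^ n) :
    ∃ U : 𝒲 →L[ℝ] 𝒲, (∀ n, U (x n) = z n) ∧
      ∀ v, (1 / 2) * ‖v‖ ≤ ‖U v‖ ∧ ‖U v‖ ≤ 2 * ‖v‖ := by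
  let F : ℕ → 𝒲 →L[ℝ] 𝒲 := fun n => (f n).smulRight (z n - x n)
  have hF : ∀ n, ‖F n‖ ≤ (1 / 4) * (1 / 2) ^ n := fun n => by
    simpa [F, ContinuousLinearMap.norm_smulRight_apply] using h n
  have hg : HasSum (fun n : ℕ => (1 / 4 : ℝ) * (1 / 2) ^ n) (1 / 2) := by
    have := hasSum_geometric_two.mul_left (1 / 4 : ℝ)
    norm_num at this ⊢
    exact this
  have hsum : Summable F := Summable.of_norm_bounded hg.summable hF
  have hS : ‖∑' n, F n‖ ≤ 1 / 2 := tsum_of_norm_bounded hg hF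
  have hSv : ∀ v, ‖(∑' n, F n) v‖ ≤ 1 / 2 * ‖v‖ := fun v =>
    ((∑' n, F n).le_opNorm v).trans (mul_le_mul_of_nonneg_right hS (norm_nonneg v))
  refine ⟨ContinuousLinearMap.id ℝ 𝒲 + ∑' n, F n, fun n => ?_, fun v => ?_⟩
  · have hev : (∑' m, F m) (x n) = ∑' m, F m (x n) :=
      (ContinuousLinearMap.apply ℝ 𝒲 (x n)).map_tsum hsum
    rw [ContinuousLinearMap.add_apply, hev, tsum_eq_single n]
    · simp [F, hf1]
    · intro m hm
      simp [F, hf0 m n hm]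
  · have h1 := hSv v
    have h2 := norm_add_le v ((∑' n, F n) v)
    have h3 := norm_sub_norm_le v (-(∑' n, F n) v)
    rw [norm_neg, sub_neg_eq_add] at h3
    have h4 := norm_nonneg v
    simp only [ContinuousLinearMap.add_apply, ContinuousLinearMap.id_apply]
    constructor <;> linarith

theorem part_one (e : ℕ → 𝒲) (he : IsSchauderBasis e)
    (α : Ordinal) (htight : IsAlphaTight e α) :
    ∀ y : ℕ → 𝒲, IsBlockSeq e y → ∀ β : Ordinal, α < β → ¬IsAlphaMinimal y β := by
  intro y hy β hβ hmin
  obtain ⟨c, -, hc⟩ := exists_coord e he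
  obtain ⟨I, hI, hA⟩ := htight y hy
  obtain ⟨hy0, D, hD, hDs⟩ := hy
  have hDn : ∀ n, (D n).Nonempty := fun n => suppIn_nonempty (hD n) (hy0 n)
  obtain ⟨A, B, hAi, hB, hAB⟩ := choose_sets D I (succ_ge D hDn hDs)
    (succ_ge I (interval_nonempty hI) hI.2)
  choose a ha using hD
  have hcy : ∀ n i, c i (y n) = if i ∈ D n then a n i else 0 := by
    intro n i
    rw [ha n]
    simp [hc]
  have hex : ∀ n, ∃ i ∈ D n, a n i ≠ 0 := by
    intro n
    by_contra hcon
    push Not at hcon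
    apply hy0 n
    rw [ha n]
    exact Finset.sum_eq_zero fun i hi => by rw [hcon i hi, zero_smul]
  choose d hd had using hex
  let Y : Submodule ℝ 𝒲 := Submodule.span ℝ (y '' B)
  have hYB : ∀ n ∈ B, y n ∈ Y := fun n hn => Submodule.subset_span ⟨n, hn, rfl⟩
  have hYinf : ¬ FiniteDimensional ℝ Y := by
    refine infDim_of_biorth y (fun n => c (d n)) (fun n => ?_) (fun n m hnm => ?_) B hB Y hYB
    · rw [hcy, if_pos (hd n)]; exact had n
    · rw [hcy, if_neg]
      intro hdm
      rcases lt_or_gt_of_ne hnm with h | h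
      · exact lt_irrefl _ (succ_lt D hDn hDs h _ (hd n) _ hdm)
      · exact lt_irrefl _ (succ_lt D hDn hDs h _ hdm _ (hd n))
  have hYle : (Y : Set 𝒲) ⊆ (closedSpan (Set.range y) : Set 𝒲) := by
    intro v hv
    exact Submodule.le_topologicalClosure _ (Submodule.span_mono (Set.image_subset_range _ _) hv)
  have hYres : Y ≤ residualSpace e I A := by
    refine Submodule.span_le.2 ?_
    rintro _ ⟨n, hn, rfl⟩
    exact mem_residual e I A _ (D n) ⟨a n, ha n⟩ (fun m hm i hi => hAB m hm n hn i hi)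
  have hblock : IsBlockSeq y y := by
    refine ⟨hy0, fun n => {n}, fun n => ⟨fun _ => 1, by simp⟩, ?_⟩
    intro n i hi j hj
    simp at hi hj
    omega
  have h1 := hmin y hblock Y hYle hYinf
  have h2 := (h1.trans (embIndex_mono y hYres)).trans (hA A hAi)
  exact absurd (WithTop.coe_le_coe.1 h2) (not_le.2 hβ)

theorem part_two [CompleteSpace 𝒲] (e : ℕ → 𝒲) (he : IsSchauderBasis e)
    (α : Ordinal) (htight : IsAlphaTight e α) :
    ∀ X : Submodule ℝ 𝒲, IsClosed (X : Set 𝒲) → ¬FiniteDimensional ℝ X →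
      ¬IsMinimalSpace X := by
  intro X hXc hX hmin
  obtain ⟨c, hc, -⟩ := exists_coord e he
  obtain ⟨p, hp, hpr⟩ := exists_humps e c hc X hX
  have hk : ∀ n, n ≤ (p n).k := fun n =>
    StrictMono.le_apply (f := fun n => (p n).k)
      (strictMono_nat_of_lt_succ fun n => (hpr n (n + 1) n.lt_succ_self).2.2.2)
  let x : ℕ → 𝒲 := fun n => (p n).x
  let z : ℕ → 𝒲 := fun n => ∑ i ∈ Finset.range (p n).M, c i (p n).x • e i
  have hf1 : ∀ n, (p n).f (x n) = 1 := fun n => (hp n).2.1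
  have hf0 : ∀ n m, n ≠ m → (p n).f (x m) = 0 := by
    intro n m hnm
    rcases lt_or_gt_of_ne hnm with h | h
    · exact (hpr n m h).1
    · exact (hpr m n h).2.1
  obtain ⟨U, hU, hUb⟩ := exists_perturb x z (fun n => (p n).f) hf1 hf0 (fun n => by
    refine (hp n).2.2.2.trans ?_
    exact mul_le_mul_of_nonneg_left
      (pow_le_pow_of_le_one (by norm_num) (by norm_num) (hk n)) (by norm_num))
  have hz0 : ∀ n, z n ≠ 0 := by
    intro n hzn
    have h1 := (hUb (x n)).1
    rw [hU, hzn, norm_zero] at h1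
    have h2 : x n = 0 := norm_le_zero_iff.1 (by linarith)
    have := hf1 n
    rw [h2, map_zero] at this
    exact zero_ne_one this
  let D : ℕ → Finset ℕ := fun n => Finset.Ico (p n).N (p n).M
  have hD : ∀ n, SuppIn e (z n) (D n) := by
    intro n
    refine ⟨fun i => c i (p n).x, ?_⟩
    refine (Finset.sum_subset ?_ ?_).symm
    · intro i hi
      exact Finset.mem_range.2 (Finset.mem_Ico.1 hi).2
    · intro i hi hi'
      have h1 := Finset.mem_range.1 hi
      have h2 : i < (p n).N := by
        by_contra hcon
        exact hi' (Finset.mem_Ico.2 ⟨not_lt.1 hcon, h1⟩)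
      rw [(hp n).2.2.1 i h2, zero_smul]
  have hDs : ∀ n, ∀ i ∈ D n, ∀ j ∈ D (n + 1), i < j := by
    intro n i hi j hj
    have h1 := (Finset.mem_Ico.1 hi).2
    have h2 := (Finset.mem_Ico.1 hj).1
    have h3 := (hpr n (n + 1) n.lt_succ_self).2.2.1
    omega
  have hDn : ∀ n, (D n).Nonempty := fun n => suppIn_nonempty (hD n) (hz0 n)
  obtain ⟨I, hI, hA⟩ := htight z ⟨hz0, D, hD, hDs⟩
  obtain ⟨A, B, hAi, hB, hAB⟩ := choose_sets D I (succ_ge D hDn hDs)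
    (succ_ge I (interval_nonempty hI) hI.2)
  let Y : Submodule ℝ 𝒲 := closedSpan (x '' B)
  have hYX : Y ≤ X := by
    refine Submodule.topologicalClosure_minimal _ (Submodule.span_le.2 ?_) hXc
    rintro _ ⟨n, -, rfl⟩
    exact (hp n).1
  have hYinf : ¬ FiniteDimensional ℝ Y :=
    infDim_of_biorth x (fun n => ((p n).f : 𝒲 →ₗ[ℝ] ℝ))
      (fun n => by simp [hf1]) (fun n m h => hf0 n m h) B hB Y
      (fun n hn => Submodule.le_topologicalClosure _ (Submodule.subset_span ⟨n, hn, rfl⟩))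
  have hYU : Y ≤ (residualSpace e I A).comap (U : 𝒲 →ₗ[ℝ] 𝒲) := by
    refine Submodule.topologicalClosure_minimal _ (Submodule.span_le.2 ?_) ?_
    · rintro _ ⟨n, hn, rfl⟩
      show U (x n) ∈ residualSpace e I A
      rw [hU]
      exact mem_residual e I A _ (D n) (hD n) (fun m hm i hi => hAB m hm n hn i hi)
    · exact (Submodule.isClosed_topologicalClosure _).preimage U.continuous
  obtain ⟨T, hT, r, C, hr, hTb⟩ := hmin Y hYX (Submodule.isClosed_topologicalClosure _) hYinf
  let xx : ℕ → X := fun n => ⟨x n, (hp n).1⟩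
  let w : ℕ → 𝒲 := fun n => U (T (xx n))
  have hw : ∀ n, w n ∈ (residualSpace e I A : Set 𝒲) := fun n => hYU (hT _)
  let K : ℝ := max 1 (max (4 * C) (4 / r))
  have hK1 : 1 ≤ K := le_max_left _ _
  have hKC : 4 * C ≤ K := (le_max_left _ _).trans (le_max_right _ _)
  have hKr : 4 / r ≤ K := (le_max_right _ _).trans (le_max_right _ _)
  have htop := embIndex_eq_top z w _ K hK1 hw (by
    intro k a
    have ew : ∑ i ∈ Finset.range k, a i • w i = U (T (∑ i ∈ Finset.range k, a i • xx i)) := by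
      simp [w, map_sum]
    have ez : ∑ i ∈ Finset.range k, a i • z i
        = U ((∑ i ∈ Finset.range k, a i • xx i : X) : 𝒲) := by
      simp [xx, map_sum, hU]
    rw [ew, ez]
    generalize (∑ i ∈ Finset.range k, a i • xx i) = v
    have h1 := hUb (T v)
    have h2 := hUb (v : 𝒲)
    have h3 := hTb v
    rw [Submodule.coe_norm] at h3
    have h0 := norm_nonneg (v : 𝒲)
    have hK0 : 0 < K := by linarith
    have h5 : 4 * C * ‖(v : 𝒲)‖ ≤ K * ‖(v : 𝒲)‖ := mul_le_mul_of_nonneg_right hKC h0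
    have h6 : 4 ≤ K * r := (div_le_iff₀ hr).1 hKr
    have h7 : 4 * ‖(v : 𝒲)‖ ≤ K * r * ‖(v : 𝒲)‖ := mul_le_mul_of_nonneg_right h6 h0
    have h8 : K * (r * ‖(v : 𝒲)‖) ≤ K * ‖T v‖ := mul_le_mul_of_nonneg_left h3.1 hK0.le
    have h9 : K * (1 / 2 * ‖T v‖) ≤ K * ‖U (T v)‖ := mul_le_mul_of_nonneg_left h1.1 hK0.le
    have h10 : K * (1 / 2 * ‖(v : 𝒲)‖) ≤ K * ‖U v‖ := mul_le_mul_of_nonneg_left h2.1 hK0.le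
    constructor
    · rw [one_div, inv_mul_le_iff₀ hK0]
      linarith
    · linarith)
  have := hA A hAi
  rw [htop] at this
  exact absurd this (by simp)

end Helpers

/-- If `𝒲 = [e n]` is `α`-tight for a countable ordinal `α`, then no block
subspace `[y n]` of `𝒲` is `β`-minimal for any `β > α`, and `𝒲` contains no minimal
infinite-dimensional closed subspace. -/
theorem alphaTight_no_beta_minimal_no_minimal_subspace
    (𝒲 : Type) [NormedAddCommGroup 𝒲] [NormedSpace ℝ 𝒲] [CompleteSpace 𝒲]
    (e : ℕ → 𝒲) (he : IsSchauderBasis e)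
    (α : Ordinal) (hα : α < (Cardinal.aleph 1).ord) (htight : IsAlphaTight e α) :
    (∀ y : ℕ → 𝒲, IsBlockSeq e y → ∀ β : Ordinal, α < β → ¬IsAlphaMinimal y β) ∧
    (∀ X : Submodule ℝ 𝒲, IsClosed (X : Set 𝒲) → ¬FiniteDimensional ℝ X →
      ¬IsMinimalSpace X) := by
  exact ⟨part_one e he α htight, part_two e he α htight⟩

end Rosendal
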